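/- arXiv:1712.05129 — 2 statements merged into one kernel-verified Lean document; each statement's English description precedes it below -/
import Mathlib

section
/- A countable amenable group G has the comparison property if and only if it has the Banach density comparison property. -/
/-!
STATEMENT 11 (Theorem `ujowe` of the paper):
A countable amenable group `G` has the comparison property iff it has the Banach
density comparison property.
-/

open Filter Topology Pointwise MeasureTheory
open scoped Classical

noncomputable def cnt {G : Type*} [Group G] (F : Finset G) (B : Set G) (g : G) : ℝ :=
  ((B ∩ ((F : Set G) * {g})).ncard : ℝ) / F.card

noncomputable def advD {G : Type*} [Group G] (F : Finset G) (B A : Set G) : ℝ :=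
  ⨅ g : G, (cnt F B g - cnt F A g)

def IsFolner {G : Type*} [Group G] (F : ℕ → Finset G) : Prop :=
  (∀ n, (F n).Nonempty) ∧
  ∀ g : G, Tendsto
    (fun n => (((({g} : Set G) * (F n : Set G)) ∩ (F n : Set G)).ncard : ℝ) / (F n).card)
    atTop (𝓝 1)

/-- `A ≼ B` for an action of `G` on `X`. -/
def Subequiv (G : Type*) [Group G] (X : Type*) [TopologicalSpace X] [MulAction G X]
    (A B : Set X) : Prop :=
  ∃ (k : ℕ) (Ai : Fin k → Set X) (g : Fin k → G),
    (∀ i, IsClopen (Ai i)) ∧ A = ⋃ i, Ai i ∧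
    (Pairwise fun i j => Disjoint (Ai i) (Ai j)) ∧
    (∀ i, g i • Ai i ⊆ B) ∧
    (Pairwise fun i j => Disjoint (g i • Ai i) (g j • Ai j))

/-- The action of `G` on `X` admits comparison. -/
def AdmitsComparison (G : Type*) [Group G] (X : Type*) [TopologicalSpace X]
    [MeasurableSpace X] [MulAction G X] : Prop :=
  ∀ A B : Set X, IsClopen A → IsClopen B →
    (∀ μ : Measure X, IsProbabilityMeasure μ → SMulInvariantMeasure G X μ → μ A < μ B) →
    Subequiv G X A B

/-- `G` has the comparison property: every action of `G` by homeomorphisms on a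
zero-dimensional compact metric space admits comparison. -/
def ComparisonProperty (G : Type*) [Group G] : Prop :=
  ∀ (X : Type) [TopologicalSpace X] [CompactSpace X] [TopologicalSpace.MetrizableSpace X]
    [TotallyDisconnectedSpace X] [MeasurableSpace X] [BorelSpace X]
    [MulAction G X] [ContinuousConstSMul G X],
    AdmitsComparison G X

/-- The shift action of `G` on `Λ^G`: `(h(x))_g = x_{gh}`. -/
def shiftMap {G : Type*} [Group G] {Λ : Type*} (h : G) (x : G → Λ) : G → Λ :=
  fun g => x (g * h)

/-- The point `y^{AB} ∈ {0,1,2}^G` determined by disjoint `A, B ⊆ G`. -/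
noncomputable def yab {G : Type*} [Group G] (A B : Set G) : G → Fin 3 :=
  fun g => if g ∈ A then 1 else if g ∈ B then 2 else 0

/-- `G` has the Banach density comparison property: whenever `A, B ⊆ G` are disjoint and
the Banach density advantage `D(B,A)` (computed along a Følner sequence) is positive,
there is an injection `φ̃ : A → B` determined by a block code evaluated along the
transitive point `y^{AB}` of the subshift `Y^{AB}`. -/
def BDComparisonProperty (G : Type*) [Group G] : Prop :=
  ∀ A B : Set G, Disjoint A B →
    (∃ Fs : ℕ → Finset G, IsFolner Fs ∧
      0 < limsup (fun n => advD (Fs n) B A) atTop) →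
    ∃ φt : G → G,
      (∃ (F E : Finset G) (Ξ : (↥(F : Set G) → Fin 3) → G),
        (∀ b, Ξ b ∈ E) ∧
        ∀ a : G, φt a = Ξ (fun f => shiftMap a (yab A B) f.1) * a) ∧
      Set.MapsTo φt A B ∧ Set.InjOn φt A

/-!
For a finite set `F ⊆ G` let `Y_F` be the subshift of all `y ∈ {0,1,2}^G` in which every translate
`Fg` carries more symbols `2` than symbols `1`. Both properties of `G` are statements about the
cylinders `[1]` and `[2]` of these subshifts.

Weak-* limits of empirical measures along a Følner sequence show that two disjoint clopen sets
satisfy `μ A < μ B` for all invariant `μ` iff some finite window sees more of `B` than of `A` along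
every orbit. The itinerary of a point then lies in some `Y_F`, so the comparison property says that
`[1] ≼ [2]` in every `Y_F`. Averaging over Følner sets likewise shows that `D(B,A) > 0` iff
`y^{AB} ∈ Y_F` for some `F`, so Banach density comparison says that every single `y ∈ Y_F` has a
block code injecting its symbols `1` into its symbols `2`.

A subequivalence `[1] ≼ [2]` is one block code doing this for all of `Y_F` at once. Conversely, if
`G` is infinite, then `Y_F` has a point with dense orbit, obtained by placing all patterns far apart
on a background of symbols `2`; since working for `y` is a closed and shift-invariant condition on
`y`, a block code for that point works on all of `Y_F`. If `G` is finite, then `Y_F` is finite and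
the orbits can be treated separately.
-/

open scoped BigOperators

section GroupAction

variable {G X Y : Type*} [Group G] [MulAction G X] [MulAction G Y]

/-- Along every orbit, the window `F` meets `B` more often than `A`. For `X = G` with left
multiplication this compares `|A ∩ Fg|` with `|B ∩ Fg|`; for a compact `X` it is the finitary form
of `μ A < μ B` for all invariant `μ`. -/
def IsAdvantageWindow (F : Finset G) (A B : Set X) : Prop :=
  ∀ x : X, {f ∈ F | f • x ∈ A}.card < {f ∈ F | f • x ∈ B}.card

/-- The displacement `x ↦ ξ x • x` carries `A` injectively into `B`. With `ξ` locally constant this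
encodes `A ≼ B`; for `X = G` it encodes an injection `a ↦ ξ a * a` from `A` to `B`. -/
def IsTransport (ξ : X → G) (A B : Set X) : Prop :=
  Set.MapsTo (fun x => ξ x • x) A B ∧ Set.InjOn (fun x => ξ x • x) A

lemma isAdvantageWindow_iff_forall_orbit {F : Finset G} {A B : Set X} :
    IsAdvantageWindow F A B ↔
      ∀ x : X, IsAdvantageWindow F {g : G | g • x ∈ A} {g : G | g • x ∈ B} := by
  refine ⟨fun h x g => ?_, fun h x => ?_⟩
  · simpa [mul_smul] using h (g • x)
  · simpa using h x 1

lemma IsTransport.preimage {ξ : Y → G} {A B : Set Y} (h : IsTransport ξ A B) {φ : X → Y}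
    (hφ : ∀ (g : G) (x : X), φ (g • x) = g • φ x) :
    IsTransport (ξ ∘ φ) (φ ⁻¹' A) (φ ⁻¹' B) := by
  refine ⟨fun x hx => ?_, fun x hx y hy hxy => ?_⟩
  · simpa only [Set.mem_preimage, Function.comp_apply, hφ] using h.1 hx
  · have hφxy : φ x = φ y :=
      h.2 hx hy (by simpa only [Function.comp_apply, hφ] using congrArg φ hxy)
    simpa [hφxy] using hxy

lemma isTransport_iff_forall_orbit {ξ : X → G} {A B : Set X} :
    IsTransport ξ A B ↔
      ∀ x : X, IsTransport (fun g : G => ξ (g • x)) {g | g • x ∈ A} {g | g • x ∈ B} := by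
  refine ⟨fun h x => h.preimage (φ := fun g : G => g • x) fun g k => mul_smul g k x,
    fun h => ⟨fun x hx => ?_, fun x hx y hy hxy => ?_⟩⟩
  · simpa using (h x).1 (show (1 : G) ∈ {g : G | g • x ∈ A} by simpa using hx)
  · have hy' : ((ξ y)⁻¹ * ξ x) • x = y := by simpa [mul_smul, inv_smul_eq_iff] using hxy
    have hone : (ξ y)⁻¹ * ξ x = 1 := (h x).2 (by simpa [hy'] using hy) (by simpa using hx)
      (by simp [hy'])
    rw [← hy', hone, one_smul]

lemma IsTransport.of_diff {ξ : X → G} {A B : Set X} (h : IsTransport ξ (A \ B) (B \ A)) :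
    IsTransport ((A \ B).mulIndicator ξ) A B := by
  have moved : ∀ {x}, x ∈ A \ B → (A \ B).mulIndicator ξ x • x = ξ x • x := fun hx => by
    rw [Set.mulIndicator_of_mem hx]
  have fixed : ∀ {x}, x ∉ A \ B → (A \ B).mulIndicator ξ x • x = x := fun hx => by
    rw [Set.mulIndicator_of_notMem hx, one_smul]
  refine ⟨fun x hx => ?_, fun x hx y hy hxy => ?_⟩
  · by_cases hxB : x ∈ A \ B
    · simpa only [moved hxB] using (h.1 hxB).1
    · simpa only [fixed hxB] using not_not.1 fun hB => hxB ⟨hx, hB⟩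
  · beta_reduce at hxy
    by_cases hxB : x ∈ A \ B <;> by_cases hyB : y ∈ A \ B
    · exact h.2 hxB hyB (by rwa [moved hxB, moved hyB] at hxy)
    · rw [moved hxB, fixed hyB] at hxy
      exact absurd hy (hxy ▸ (h.1 hxB).2)
    · rw [fixed hxB, moved hyB] at hxy
      exact absurd hx (hxy ▸ (h.1 hyB).2)
    · rwa [fixed hxB, fixed hyB] at hxy

end GroupAction

section Subequivalence

variable {G X Y : Type*} [Group G] [TopologicalSpace X] [MulAction G X]
  [TopologicalSpace Y] [MulAction G Y]

lemma subequiv_of_isTransport [CompactSpace X] {A B : Set X} (hA : IsClopen A) {ξ : X → G}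
    (hξ : IsLocallyConstant ξ) (h : IsTransport ξ A B) : Subequiv G X A B := by
  let e := (Set.Finite.toFinset hξ.range_finite).equivFin.symm
  have he : Function.Injective fun i => (e i : G) := Subtype.val_injective.comp e.injective
  refine ⟨_, fun i => A ∩ ξ ⁻¹' {(e i : G)}, fun i => e i,
    fun i => hA.inter (hξ.isClopen_fiber _), ?_, fun i j hij => ?_, ?_, fun i j hij => ?_⟩
  · ext x
    simp only [Set.mem_iUnion, Set.mem_inter_iff, exists_and_left, Set.mem_preimage,
      Set.mem_singleton_iff, iff_self_and]
    exact fun _ => ⟨e.symm ⟨ξ x, by simp⟩, by simp⟩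
  · refine Set.disjoint_left.2 fun x hxi hxj => hij (he ?_)
    exact hxi.2.symm.trans hxj.2
  · rintro i _ ⟨x, ⟨hx, hxi : ξ x = e i⟩, rfl⟩
    simpa only [hxi] using h.1 hx
  · refine Set.disjoint_left.2 ?_
    rintro _ ⟨x, ⟨hx, hxi : ξ x = e i⟩, rfl⟩ ⟨y, ⟨hy, hyj : ξ y = e j⟩, hyx : (e j : G) • y = _⟩
    have hyx' : y = x := h.2 hy hx (by simpa only [hxi, hyj] using hyx)
    exact hij (he (by simp only [← hxi, ← hyj, hyx']))

lemma Subequiv.exists_isTransport {A B : Set X} (h : Subequiv G X A B) :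
    ∃ ξ : X → G, IsLocallyConstant ξ ∧ IsTransport ξ A B := by
  obtain ⟨k, P, g, hP, rfl, hPdisj, hgB, hgdisj⟩ := h
  let ξ : X → G := fun x => if hx : ∃ i, x ∈ P i then g hx.choose else 1
  have hξ : ∀ {i x}, x ∈ P i → ξ x = g i := fun {i x} hx => by
    have hex : ∃ i, x ∈ P i := ⟨i, hx⟩
    have hi : hex.choose = i := hPdisj.eq (Set.not_disjoint_iff.2 ⟨x, hex.choose_spec, hx⟩)
    simp only [ξ, dif_pos hex, hi]
  refine ⟨ξ, (IsLocallyConstant.iff_exists_open ξ).2 fun x => ?_, fun x hx => ?_,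
    fun x hx y hy hxy => ?_⟩
  · by_cases hx : ∃ i, x ∈ P i
    · obtain ⟨i, hi⟩ := hx
      exact ⟨P i, (hP i).isOpen, hi, fun y hy => by rw [hξ hy, hξ hi]⟩
    · refine ⟨(⋃ i, P i)ᶜ, (isClopen_iUnion_of_finite hP).compl.isOpen, by simpa using hx,
        fun y hy => ?_⟩
      simp only [ξ, dif_neg hx, dif_neg (show ¬∃ i, y ∈ P i by simpa using hy)]
  · obtain ⟨i, hi⟩ := Set.mem_iUnion.1 hx
    simpa only [hξ hi] using hgB i (Set.smul_mem_smul_set hi)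
  · obtain ⟨i, hi⟩ := Set.mem_iUnion.1 hx
    obtain ⟨j, hj⟩ := Set.mem_iUnion.1 hy
    simp only [hξ hi, hξ hj] at hxy
    obtain rfl : i = j := hgdisj.eq (Set.not_disjoint_iff.2
      ⟨g i • x, Set.smul_mem_smul_set hi, hxy ▸ Set.smul_mem_smul_set hj⟩)
    exact smul_left_cancel _ hxy

lemma Subequiv.preimage [CompactSpace X] {A B : Set Y} (h : Subequiv G Y A B) (hA : IsClopen A)
    {φ : X → Y} (hφc : Continuous φ) (hφ : ∀ (g : G) (x : X), φ (g • x) = g • φ x) :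
    Subequiv G X (φ ⁻¹' A) (φ ⁻¹' B) := by
  obtain ⟨ξ, hξ, hAB⟩ := h.exists_isTransport
  exact subequiv_of_isTransport (hA.preimage hφc) (hξ.comp_continuous hφc) (hAB.preimage hφ)

lemma Subequiv.of_diff [CompactSpace X] {A B : Set X} (hA : IsClopen A) (hB : IsClopen B)
    (h : Subequiv G X (A \ B) (B \ A)) : Subequiv G X A B := by
  obtain ⟨ξ, hξ, hAB⟩ := h.exists_isTransport
  exact subequiv_of_isTransport hA
    ((⟨ξ, hξ⟩ : LocallyConstant X G).mulIndicator (hA.diff hB)).isLocallyConstant hAB.of_diff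

end Subequivalence

section SignedIndicator

variable {G X : Type*} {A B : Set X}

/-- The weight `+1` on `B` and `-1` on `A`: its integral, or its average over a window, is the
advantage of `B` over `A`. -/
noncomputable def signedIndicator (A B : Set X) : X → ℝ :=
  B.indicator 1 - A.indicator 1

lemma abs_signedIndicator_le_one (x : X) : |signedIndicator A B x| ≤ 1 := by
  by_cases hA : x ∈ A <;> by_cases hB : x ∈ B <;> simp [signedIndicator, hA, hB]

lemma sum_signedIndicator_smul [SMul G X] (F : Finset G) (x : X) :
    ∑ f ∈ F, signedIndicator A B (f • x) =
      ({f ∈ F | f • x ∈ B}.card : ℝ) - ({f ∈ F | f • x ∈ A}.card : ℝ) := by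
  simp [signedIndicator, Set.indicator_apply]

variable [Group G] [MulAction G X] {F : Finset G}

lemma isAdvantageWindow_iff_forall_sum_pos :
    IsAdvantageWindow F A B ↔ ∀ x : X, 0 < ∑ f ∈ F, signedIndicator A B (f • x) := by
  simp [IsAdvantageWindow, sum_signedIndicator_smul]

lemma IsAdvantageWindow.one_le_sum (h : IsAdvantageWindow F A B) (x : X) :
    1 ≤ ∑ f ∈ F, signedIndicator A B (f • x) := by
  rw [sum_signedIndicator_smul, le_sub_iff_add_le']
  exact_mod_cast h x

lemma IsAdvantageWindow.nonempty [Nonempty X] (h : IsAdvantageWindow F A B) : F.Nonempty := by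
  rw [Finset.nonempty_iff_ne_empty]
  rintro rfl
  simpa using h (Classical.arbitrary X)

end SignedIndicator

section Folner

variable {G : Type*} [Group G]

/-- The proportion of the translate `g • K` lying outside `K`, which tends to `0` along a
Følner sequence. -/
noncomputable def folnerDefect (K : Finset G) (g : G) : ℝ :=
  ((g • K) \ K).card / K.card

lemma folnerDefect_eq_one_sub {K : Finset G} (hK : K.Nonempty) (g : G) :
    folnerDefect K g = 1 - ((({g} : Set G) * (K : Set G)) ∩ (K : Set G)).ncard / K.card := by
  have hinter : (({g} : Set G) * (K : Set G)) ∩ (K : Set G) = ((g • K ∩ K : Finset G) : Set G) := by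
    rw [Finset.coe_inter, Finset.coe_smul_finset, Set.singleton_mul, ← Set.image_smul]
    rfl
  have hcard : ((g • K ∩ K).card : ℝ) + ((g • K) \ K).card = K.card := by
    exact_mod_cast (Finset.card_inter_add_card_sdiff (g • K) K).trans (Finset.card_smul_finset g K)
  have hK0 : (K.card : ℝ) ≠ 0 := by exact_mod_cast hK.card_ne_zero
  rw [hinter, Set.ncard_coe_finset, folnerDefect, div_eq_iff hK0, sub_mul, div_mul_cancel₀ _ hK0]
  linarith

lemma IsFolner.tendsto_folnerDefect {Fs : ℕ → Finset G} (hFs : IsFolner Fs) (g : G) :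
    Tendsto (fun n => folnerDefect (Fs n) g) atTop (𝓝 0) := by
  simpa [folnerDefect_eq_one_sub (hFs.1 _)] using (hFs.2 g).const_sub 1

lemma abs_expect_mul_left_sub_expect_le (K : Finset G) (g : G) {v : G → ℝ} {C : ℝ}
    (hv : ∀ k, |v k| ≤ C) :
    |(𝔼 k ∈ K, v (g * k)) - 𝔼 k ∈ K, v k| ≤ 2 * C * folnerDefect K g := by
  have htranslate : ∑ k ∈ K, v (g * k) = ∑ k ∈ g • K, v k :=
    (Finset.sum_image fun _ _ _ _ h => mul_left_cancel h).symm
  have hcard : (K \ g • K).card = (g • K \ K).card :=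
    Finset.card_sdiff_comm (Finset.card_smul_finset g K).symm
  have hsum : ∀ s : Finset G, |∑ k ∈ s, v k| ≤ C * s.card := fun s =>
    calc |∑ k ∈ s, v k| ≤ ∑ k ∈ s, |v k| := Finset.abs_sum_le_sum_abs _ _
      _ ≤ s.card • C := Finset.sum_le_card_nsmul _ _ _ fun k _ => hv k
      _ = C * s.card := by rw [nsmul_eq_mul, mul_comm]
  rw [Finset.expect_eq_sum_div_card, Finset.expect_eq_sum_div_card, ← sub_div, abs_div,
    Nat.abs_cast, folnerDefect, ← mul_div_assoc]
  gcongr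
  calc |∑ k ∈ K, v (g * k) - ∑ k ∈ K, v k|
      = |∑ k ∈ g • K \ K, v k - ∑ k ∈ K \ g • K, v k| := by
        rw [htranslate, Finset.sum_sdiff_sub_sum_sdiff]
    _ ≤ |∑ k ∈ g • K \ K, v k| + |∑ k ∈ K \ g • K, v k| := abs_sub _ _
    _ ≤ C * (g • K \ K).card + C * (K \ g • K).card := add_le_add (hsum _) (hsum _)
    _ = 2 * C * (g • K \ K).card := by rw [hcard]; ring

end Folner

section BanachDensity

variable {G : Type*} [Group G] {A B : Set G}

lemma ncard_inter_mul_singleton (F : Finset G) (B : Set G) (g : G) :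
    (B ∩ ((F : Set G) * {g})).ncard = {f ∈ F | f • g ∈ B}.card := by
  have himage : B ∩ ((F : Set G) * {g}) = (· * g) '' ({f ∈ F | f • g ∈ B} : Finset G) := by
    ext x
    simp only [Set.mul_singleton, Finset.coe_filter, Set.mem_inter_iff, Set.mem_image,
      Finset.mem_coe, Set.mem_ofPred_eq, smul_eq_mul]
    grind
  rw [himage, Set.ncard_image_of_injective _ (mul_left_injective g), Set.ncard_coe_finset]

lemma cnt_sub_cnt (F : Finset G) (A B : Set G) (g : G) :
    cnt F B g - cnt F A g = 𝔼 f ∈ F, signedIndicator A B (f * g) := by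
  rw [cnt, cnt, ← sub_div, ncard_inter_mul_singleton, ncard_inter_mul_singleton,
    ← sum_signedIndicator_smul, Finset.expect_eq_sum_div_card]
  rfl

lemma abs_cnt_sub_cnt_le_one (F : Finset G) (A B : Set G) (g : G) :
    |cnt F B g - cnt F A g| ≤ 1 := by
  rw [cnt_sub_cnt]
  rcases F.eq_empty_or_nonempty with rfl | hF
  · simp
  · exact (Finset.abs_expect_le _ _).trans
      (Finset.expect_le hF fun f _ => abs_signedIndicator_le_one _)

lemma advD_le_cnt_sub_cnt (F : Finset G) (A B : Set G) (g : G) :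
    advD F B A ≤ cnt F B g - cnt F A g := by
  refine ciInf_le ⟨-1, ?_⟩ g
  rintro _ ⟨g, rfl⟩
  exact neg_le_of_abs_le (abs_cnt_sub_cnt_le_one F A B g)

lemma neg_one_le_advD (F : Finset G) (A B : Set G) : -1 ≤ advD F B A :=
  le_ciInf fun g => neg_le_of_abs_le (abs_cnt_sub_cnt_le_one F A B g)

lemma advD_le_one (F : Finset G) (A B : Set G) : advD F B A ≤ 1 :=
  (advD_le_cnt_sub_cnt F A B 1).trans (le_of_abs_le (abs_cnt_sub_cnt_le_one F A B 1))

lemma isAdvantageWindow_of_advD_pos {F : Finset G} (h : 0 < advD F B A) :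
    IsAdvantageWindow F A B := by
  refine isAdvantageWindow_iff_forall_sum_pos.2 fun g => ?_
  have hpos : 0 < 𝔼 f ∈ F, signedIndicator A B (f * g) :=
    (h.trans_le (advD_le_cnt_sub_cnt F A B g)).trans_eq (cnt_sub_cnt F A B g)
  rw [Finset.expect_eq_sum_div_card] at hpos
  exact lt_of_not_ge fun hle =>
    hpos.not_ge (div_nonpos_of_nonpos_of_nonneg hle (Nat.cast_nonneg _))

lemma IsAdvantageWindow.le_advD {F K : Finset G} (hK : K.Nonempty) (h : IsAdvantageWindow F A B) :
    (F.card : ℝ)⁻¹ - 𝔼 f ∈ F, 2 * folnerDefect K f ≤ advD K B A := by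
  refine le_ciInf fun g => ?_
  rw [cnt_sub_cnt, sub_le_iff_le_add]
  set w := signedIndicator A B
  calc (F.card : ℝ)⁻¹ ≤ 𝔼 k ∈ K, 𝔼 f ∈ F, w (f * k * g) := by
        refine Finset.le_expect hK fun k _ => ?_
        rw [Finset.expect_eq_sum_div_card, inv_eq_one_div]
        gcongr
        simpa [mul_assoc] using h.one_le_sum (k * g)
    _ = 𝔼 f ∈ F, 𝔼 k ∈ K, w (f * k * g) := Finset.expect_comm _ _ _
    _ ≤ 𝔼 f ∈ F, ((𝔼 k ∈ K, w (k * g)) + 2 * folnerDefect K f) := by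
        refine Finset.expect_le_expect fun f _ => ?_
        have hshift := abs_expect_mul_left_sub_expect_le K f (v := fun k => w (k * g))
          fun k => abs_signedIndicator_le_one _
        linarith [le_of_abs_le hshift]
    _ = (𝔼 k ∈ K, w (k * g)) + 𝔼 f ∈ F, 2 * folnerDefect K f := by
        rw [Finset.expect_add_distrib, Finset.expect_const h.nonempty]

lemma IsFolner.limsup_advD_pos_iff {Fs : ℕ → Finset G} (hFs : IsFolner Fs) :
    0 < limsup (fun n => advD (Fs n) B A) atTop ↔ ∃ F : Finset G, IsAdvantageWindow F A B := by
  constructor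
  · intro hpos
    have hfreq : ∃ᶠ n in atTop, 0 < advD (Fs n) B A := frequently_lt_of_lt_limsup
      (isCoboundedUnder_le_of_le _ (x := -1) fun n => neg_one_le_advD _ A B) hpos
    obtain ⟨n, hn⟩ := hfreq.exists
    exact ⟨Fs n, isAdvantageWindow_of_advD_pos hn⟩
  · rintro ⟨F, hF⟩
    have hlim : Tendsto (fun n => (F.card : ℝ)⁻¹ - 𝔼 f ∈ F, 2 * folnerDefect (Fs n) f) atTop
        (𝓝 (F.card : ℝ)⁻¹) := by
      simp only [Finset.expect_eq_sum_div_card]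
      simpa using ((tendsto_finsetSum F fun f _ =>
        (hFs.tendsto_folnerDefect f).const_mul 2).div_const (F.card : ℝ)).const_sub (F.card : ℝ)⁻¹
    calc 0 < (F.card : ℝ)⁻¹ := by
          have := hF.nonempty.card_pos
          positivity
      _ = limsup (fun n => (F.card : ℝ)⁻¹ - 𝔼 f ∈ F, 2 * folnerDefect (Fs n) f) atTop :=
          hlim.limsup_eq.symm
      _ ≤ limsup (fun n => advD (Fs n) B A) atTop :=
          limsup_le_limsup (.of_forall fun n => hF.le_advD (hFs.1 n))
            hlim.isCoboundedUnder_le (isBoundedUnder_of ⟨1, fun n => advD_le_one _ A B⟩)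

end BanachDensity

section InvariantMeasure

variable {G X : Type*} [Group G] [MeasurableSpace X] [MulAction G X]

/-- The uniform probability measure on the orbit segment `K • x`, counted with multiplicity;
its weak-* limits along a Følner sequence are invariant. -/
noncomputable def empiricalMeasure (K : Finset G) (x : X) : Measure X :=
  (K.card : ENNReal)⁻¹ • ∑ k ∈ K, Measure.dirac (k • x)

lemma isProbabilityMeasure_empiricalMeasure {K : Finset G} (hK : K.Nonempty) (x : X) :
    IsProbabilityMeasure (empiricalMeasure K x) where
  measure_univ := by
    simpa [empiricalMeasure] using
      ENNReal.inv_mul_cancel (Nat.cast_ne_zero.2 hK.card_ne_zero) (ENNReal.natCast_ne_top _)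

variable [TopologicalSpace X] [BorelSpace X]

lemma integral_empiricalMeasure (K : Finset G) (x : X) {v : X → ℝ} (hv : Continuous v) :
    ∫ z, v z ∂empiricalMeasure K x = 𝔼 k ∈ K, v (k • x) := by
  have hintegrable : ∀ k ∈ K, Integrable v (Measure.dirac (k • x)) := fun k _ =>
    integrable_dirac' hv.stronglyMeasurable (by simp)
  rw [empiricalMeasure, integral_smul_measure, integral_finsetSum_measure hintegrable]
  simp [integral_dirac' _ _ hv.stronglyMeasurable, Finset.expect_eq_sum_div_card,
    div_eq_inv_mul]

variable [TopologicalSpace.MetrizableSpace X]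

lemma exists_tendsto_expect_integral [CompactSpace X] {ι : Type*} (U : Ultrafilter ι)
    {K : ι → Finset G} (hK : ∀ i, (K i).Nonempty) (x : ι → X) :
    ∃ μ : ProbabilityMeasure X, ∀ v : C(X, ℝ),
      Tendsto (fun i => 𝔼 k ∈ K i, v (k • x i)) U (𝓝 (∫ z, v z ∂(μ : Measure X))) := by
  let ν : ι → ProbabilityMeasure X := fun i =>
    ⟨empiricalMeasure (K i) (x i), isProbabilityMeasure_empiricalMeasure (hK i) (x i)⟩
  obtain ⟨μ, -, hμ⟩ := (isCompact_univ (X := ProbabilityMeasure X)).ultrafilter_le_nhds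
    (U.map ν) (by simp)
  refine ⟨μ, fun v => ?_⟩
  have hv := ProbabilityMeasure.tendsto_iff_forall_integral_tendsto.1
    (show Tendsto ν U (𝓝 μ) from hμ) (BoundedContinuousFunction.mkOfCompact v)
  exact hv.congr fun i => integral_empiricalMeasure (K i) (x i) v.continuous

variable [ContinuousConstSMul G X]

lemma smulInvariantMeasure_of_forall_integral_smul {μ : Measure X} [IsFiniteMeasure μ]
    (h : ∀ (g : G) (v : C(X, ℝ)), ∫ z, v (g • z) ∂μ = ∫ z, v z ∂μ) :
    SMulInvariantMeasure G X μ where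
  measure_preimage_smul g s hs := by
    have hg : Measurable fun z : X => g • z := (continuous_const_smul g).measurable
    rw [← Measure.map_apply hg hs]
    congr 1
    refine ext_of_forall_integral_eq_of_IsFiniteMeasure fun v => ?_
    rw [integral_map hg.aemeasurable v.continuous.stronglyMeasurable.aestronglyMeasurable]
    exact h g v.toContinuousMap

lemma IsFolner.smulInvariantMeasure_of_tendsto [CompactSpace X] {Fs : ℕ → Finset G}
    (hFs : IsFolner Fs) {l : Filter ℕ} [l.NeBot] (hl : l ≤ atTop) {x : ℕ → X}
    {μ : Measure X} [IsFiniteMeasure μ]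
    (hμ : ∀ v : C(X, ℝ), Tendsto (fun n => 𝔼 k ∈ Fs n, v (k • x n)) l (𝓝 (∫ z, v z ∂μ))) :
    SMulInvariantMeasure G X μ := by
  refine smulInvariantMeasure_of_forall_integral_smul fun g v => ?_
  have hshift := hμ (v.comp ⟨fun z : X => g • z, continuous_const_smul g⟩)
  refine sub_eq_zero.1 (tendsto_nhds_unique (hshift.sub (hμ v)) ?_)
  have hdefect : Tendsto (fun n => 2 * ‖v‖ * folnerDefect (Fs n) g) l (𝓝 0) := by
    simpa using ((hFs.tendsto_folnerDefect g).mono_left hl).const_mul (2 * ‖v‖)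
  refine squeeze_zero_norm (fun n => ?_) hdefect
  simpa [mul_smul] using abs_expect_mul_left_sub_expect_le (Fs n) g (v := fun k => v (k • x n))
    fun k => v.norm_coe_le_norm _

end InvariantMeasure

section MeasureAdvantage

variable {G X : Type*} [Group G] [MeasurableSpace X] [MulAction G X] {A B : Set X}

lemma integrable_signedIndicator (hA : MeasurableSet A) (hB : MeasurableSet B) (μ : Measure X)
    [IsFiniteMeasure μ] : Integrable (signedIndicator A B) μ :=
  ((integrable_const 1).indicator hB).sub ((integrable_const 1).indicator hA)

lemma integral_signedIndicator (hA : MeasurableSet A) (hB : MeasurableSet B) (μ : Measure X)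
    [IsFiniteMeasure μ] : ∫ x, signedIndicator A B x ∂μ = μ.real B - μ.real A := by
  simp only [signedIndicator, Pi.sub_apply]
  rw [integral_sub ((integrable_const 1).indicator hB) ((integrable_const 1).indicator hA),
    integral_indicator_one hB, integral_indicator_one hA]

lemma measure_lt_measure_iff_integral_signedIndicator_pos (hA : MeasurableSet A)
    (hB : MeasurableSet B) (μ : Measure X) [IsFiniteMeasure μ] :
    μ A < μ B ↔ 0 < ∫ x, signedIndicator A B x ∂μ := by
  rw [integral_signedIndicator hA hB, sub_pos, Measure.real, Measure.real,
    ENNReal.toReal_lt_toReal (measure_ne_top μ A) (measure_ne_top μ B)]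

lemma IsAdvantageWindow.measure_lt_measure [MeasurableConstSMul G X] {F : Finset G}
    (h : IsAdvantageWindow F A B) (hA : MeasurableSet A) (hB : MeasurableSet B) (μ : Measure X)
    [IsProbabilityMeasure μ] [SMulInvariantMeasure G X μ] : μ A < μ B := by
  rw [measure_lt_measure_iff_integral_signedIndicator_pos hA hB]
  have hintegrable := integrable_signedIndicator hA hB μ
  have hintegrable_smul : ∀ f ∈ F, Integrable (fun x => signedIndicator A B (f • x)) μ := fun f _ =>
    (measurePreserving_smul f μ).integrable_comp_of_integrable hintegrable
  have hsum : 1 ≤ F.card * ∫ x, signedIndicator A B x ∂μ :=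
    calc 1 = ∫ _, (1 : ℝ) ∂μ := by simp
      _ ≤ ∫ x, ∑ f ∈ F, signedIndicator A B (f • x) ∂μ :=
          integral_mono (integrable_const 1) (integrable_finsetSum F hintegrable_smul) h.one_le_sum
      _ = F.card * ∫ x, signedIndicator A B x ∂μ := by
          simp [integral_finsetSum F hintegrable_smul, integral_smul_eq_self]
  exact pos_of_mul_pos_right (one_pos.trans_le hsum) (Nat.cast_nonneg _)

lemma IsFolner.exists_isAdvantageWindow [TopologicalSpace X] [BorelSpace X] [CompactSpace X]
    [TopologicalSpace.MetrizableSpace X] [ContinuousConstSMul G X] {Fs : ℕ → Finset G}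
    (hFs : IsFolner Fs) (hA : IsClopen A) (hB : IsClopen B)
    (h : ∀ μ : Measure X, IsProbabilityMeasure μ → SMulInvariantMeasure G X μ → μ A < μ B) :
    ∃ F : Finset G, IsAdvantageWindow F A B := by
  by_contra! hno
  have hbad : ∀ n, ∃ x : X, ∑ f ∈ Fs n, signedIndicator A B (f • x) ≤ 0 := fun n => by
    simpa [isAdvantageWindow_iff_forall_sum_pos] using hno (Fs n)
  choose x hx using hbad
  obtain ⟨μ, hμ⟩ := exists_tendsto_expect_integral (hyperfilter ℕ) hFs.1 x
  have hinv : SMulInvariantMeasure G X (μ : Measure X) :=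
    hFs.smulInvariantMeasure_of_tendsto Nat.hyperfilter_le_atTop hμ
  have hcont : Continuous (signedIndicator A B) :=
    (continuous_one.indicator (by simp [hB.frontier_eq])).sub
      (continuous_one.indicator (by simp [hA.frontier_eq]))
  have hle : ∫ z, signedIndicator A B z ∂(μ : Measure X) ≤ 0 :=
    le_of_tendsto' (hμ ⟨_, hcont⟩) fun n => by
      rw [Finset.expect_eq_sum_div_card]
      exact div_nonpos_of_nonpos_of_nonneg (hx n) (Nat.cast_nonneg _)
  exact hle.not_gt ((measure_lt_measure_iff_integral_signedIndicator_pos hA.isOpen.measurableSet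
    hB.isOpen.measurableSet _).1 (h μ inferInstance hinv))

end MeasureAdvantage

section SmallSpace

-- `ComparisonProperty` quantifies over spaces in `Type`, while `G → Fin 3` lives in the universe
-- of `G`.
lemma ComparisonProperty.admitsComparison {G X : Type*} [Group G] (hG : ComparisonProperty G)
    [Small.{0} X] [TopologicalSpace X] [CompactSpace X] [TopologicalSpace.MetrizableSpace X]
    [TotallyDisconnectedSpace X] [MeasurableSpace X] [BorelSpace X] [MulAction G X]
    [ContinuousConstSMul G X] : AdmitsComparison G X := by
  intro A B hA hB hAB
  let e : X ≃ₜ Shrink.{0} X := Shrink.homeomorph X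
  have he : ∀ (g : G) (x : X), e (g • x) = g • e x := equivShrink_smul
  have he' : ∀ (g : G) (z : Shrink.{0} X), e.symm (g • z) = g • e.symm z := equivShrink_symm_smul
  let : MeasurableSpace (Shrink.{0} X) := borel _
  have : BorelSpace (Shrink.{0} X) := ⟨rfl⟩
  have : CompactSpace (Shrink.{0} X) := e.compactSpace
  have : TopologicalSpace.MetrizableSpace (Shrink.{0} X) := e.symm.isEmbedding.metrizableSpace
  have : TotallyDisconnectedSpace (Shrink.{0} X) := e.totallyDisconnectedSpace
  have : ContinuousConstSMul G (Shrink.{0} X) :=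
    ⟨fun g => by
      simpa [Function.comp_def, he] using
        e.continuous.comp ((continuous_const_smul g).comp e.symm.continuous)⟩
  have hsub : Subequiv G (Shrink.{0} X) (e.symm ⁻¹' A) (e.symm ⁻¹' B) := by
    refine hG _ _ _ (hA.preimage e.symm.continuous) (hB.preimage e.symm.continuous)
      fun μ hμ hinv => ?_
    have hmeas : Measurable e.symm := e.symm.continuous.measurable
    have := hAB (μ.map e.symm) (Measure.isProbabilityMeasure_map hmeas.aemeasurable)
      (smulInvariantMeasure_map μ _ he' hmeas)
    rwa [Measure.map_apply hmeas hA.isOpen.measurableSet,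
      Measure.map_apply hmeas hB.isOpen.measurableSet] at this
  simpa [← Set.preimage_comp] using hsub.preimage (hA.preimage e.symm.continuous) e.continuous he

end SmallSpace

section Shift

variable {G Λ : Type*} [Group G]

@[simp] lemma shiftMap_apply (h : G) (y : G → Λ) (g : G) : shiftMap h y g = y (g * h) := rfl

lemma shiftMap_one (y : G → Λ) : shiftMap 1 y = y := by ext; simp

lemma shiftMap_mul (g h : G) (y : G → Λ) : shiftMap (g * h) y = shiftMap g (shiftMap h y) := by
  ext; simp [mul_assoc]

lemma continuous_shiftMap [TopologicalSpace Λ] (h : G) :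
    Continuous (shiftMap h : (G → Λ) → G → Λ) :=
  continuous_pi fun g => continuous_apply (g * h)

end Shift

section AdvantageShift

variable {G : Type*} [Group G] {F : Finset G}

/-- The subshift of all `y ∈ {0,1,2}^G` in which every translate `F * g` carries more symbols `2`
than symbols `1`. It contains `y^{AB}` exactly when `F` is an advantage window for `A` and `B`. -/
def advantageShift (F : Finset G) : Set (G → Fin 3) :=
  {y | IsAdvantageWindow F (y ⁻¹' {1}) (y ⁻¹' {2})}

lemma shiftMap_mem_advantageShift {y : G → Fin 3} (hy : y ∈ advantageShift F) (h : G) :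
    shiftMap h y ∈ advantageShift F := fun g => by
  simpa [mul_assoc] using hy (g * h)

lemma isClosed_advantageShift (F : Finset G) : IsClosed (advantageShift F) := by
  have hcount : ∀ (g : G) (i : Fin 3),
      Continuous fun y : G → Fin 3 => {f ∈ F | f • g ∈ y ⁻¹' {i}}.card := fun g i => by
    have hsum : (fun y : G → Fin 3 => {f ∈ F | f • g ∈ y ⁻¹' {i}}.card) =
        fun y => ∑ f ∈ F, ({i} : Set (Fin 3)).indicator 1 (y (f * g)) := by
      ext y
      simp [Set.indicator_apply]
    rw [hsum]
    exact continuous_finsetSum F fun f _ =>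
      (continuous_of_discreteTopology (f := ({i} : Set (Fin 3)).indicator 1)).comp
        (continuous_apply (f * g))
  have hinter : advantageShift F = ⋂ g : G, (fun y : G → Fin 3 =>
      ({f ∈ F | f • g ∈ y ⁻¹' {1}}.card, {f ∈ F | f • g ∈ y ⁻¹' {2}}.card)) ⁻¹'
        {p : ℕ × ℕ | p.1 < p.2} := by
    ext y
    simp [advantageShift, IsAdvantageWindow]
  rw [hinter]
  exact isClosed_iInter fun g =>
    (isClosed_discrete _).preimage ((hcount g 1).prodMk (hcount g 2))

instance : CompactSpace (advantageShift F) :=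
  isCompact_iff_compactSpace.1 (isClosed_advantageShift F).isCompact

instance : MulAction G (advantageShift F) where
  smul h y := ⟨shiftMap h y.1, shiftMap_mem_advantageShift y.2 h⟩
  one_smul y := Subtype.ext (shiftMap_one y.1)
  mul_smul g h y := Subtype.ext (shiftMap_mul g h y.1)

lemma coe_smul_advantageShift (h : G) (y : advantageShift F) :
    ((h • y : advantageShift F) : G → Fin 3) = shiftMap h y := rfl

instance : ContinuousConstSMul G (advantageShift F) where
  continuous_const_smul h :=
    ((continuous_shiftMap h).comp continuous_subtype_val).subtype_mk _

/-- The cylinder of points of `advantageShift F` carrying the symbol `i` at the identity. -/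
def symbolCylinder (F : Finset G) (i : Fin 3) : Set (advantageShift F) :=
  {y | y.1 1 = i}

lemma isClopen_symbolCylinder (i : Fin 3) : IsClopen (symbolCylinder F i) :=
  (isClopen_discrete {i}).preimage ((continuous_apply 1).comp continuous_subtype_val)

lemma setOf_smul_mem_symbolCylinder (y : advantageShift F) (i : Fin 3) :
    {g : G | g • y ∈ symbolCylinder F i} = y.1 ⁻¹' {i} := by
  ext g
  simp [symbolCylinder, coe_smul_advantageShift]

lemma isAdvantageWindow_symbolCylinder (F : Finset G) :
    IsAdvantageWindow F (symbolCylinder F 1) (symbolCylinder F 2) :=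
  isAdvantageWindow_iff_forall_orbit.2 fun y => by
    simpa only [setOf_smul_mem_symbolCylinder] using! y.2

lemma yab_preimage_one (A B : Set G) : yab A B ⁻¹' {1} = A := by
  ext g
  by_cases hA : g ∈ A <;> by_cases hB : g ∈ B <;> simp [yab, hA, hB]

lemma yab_preimage_two {A B : Set G} (hAB : Disjoint A B) : yab A B ⁻¹' {2} = B := by
  ext g
  have := @Set.disjoint_left.1 hAB g
  by_cases hA : g ∈ A <;> by_cases hB : g ∈ B <;> simp_all [yab]

lemma yab_preimage_preimage (y : G → Fin 3) : yab (y ⁻¹' {1}) (y ⁻¹' {2}) = y := by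
  ext g
  have : y g = 0 ∨ y g = 1 ∨ y g = 2 := by grind
  rcases this with h | h | h <;> simp [yab, h]

lemma yab_mem_advantageShift_iff {A B : Set G} (hAB : Disjoint A B) :
    yab A B ∈ advantageShift F ↔ IsAdvantageWindow F A B := by
  rw [advantageShift, Set.mem_ofPred_eq, yab_preimage_one, yab_preimage_two hAB]

end AdvantageShift

section Comparison

variable {G : Type*} [Group G]

lemma measure_diff_lt_measure_diff {X : Type*} [MeasurableSpace X] {A B : Set X}
    (hA : MeasurableSet A) (hB : MeasurableSet B) {μ : Measure X} [IsFiniteMeasure μ]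
    (h : μ A < μ B) : μ (A \ B) < μ (B \ A) := by
  rw [← measure_inter_add_sdiff A hB, ← measure_inter_add_sdiff B hA, Set.inter_comm B A] at h
  exact lt_of_add_lt_add_left h

lemma subequiv_of_isAdvantageWindow {X : Type*} [TopologicalSpace X] [CompactSpace X]
    [MulAction G X] [ContinuousConstSMul G X] {F : Finset G} {A B : Set X} (hA : IsClopen A)
    (hB : IsClopen B) (hAB : Disjoint A B) (h : IsAdvantageWindow F A B)
    (hF : Subequiv G (advantageShift F) (symbolCylinder F 1) (symbolCylinder F 2)) :
    Subequiv G X A B := by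
  have hdisj : ∀ x : X, Disjoint {g : G | g • x ∈ A} {g : G | g • x ∈ B} := fun x =>
    hAB.preimage (fun g : G => g • x)
  let itinerary : X → advantageShift F := fun x =>
    ⟨yab {g | g • x ∈ A} {g | g • x ∈ B},
      (yab_mem_advantageShift_iff (hdisj x)).2 (isAdvantageWindow_iff_forall_orbit.1 h x)⟩
  have hequiv : ∀ (g : G) (x : X), itinerary (g • x) = g • itinerary x := fun g x =>
    Subtype.ext (funext fun k => by simp [itinerary, coe_smul_advantageShift, yab, mul_smul])
  have hcont : Continuous itinerary := by
    refine Continuous.subtype_mk (continuous_pi fun g => ?_) _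
    have hclopen : ∀ {C : Set X}, IsClopen C → IsClopen {x | g • x ∈ C} := fun hC =>
      hC.preimage (continuous_const_smul g)
    exact continuous_const.if (by simp [(hclopen hA).frontier_eq])
      (continuous_const.if (by simp [(hclopen hB).frontier_eq]) continuous_const)
  have hfiber : ∀ i : Fin 3, itinerary ⁻¹' symbolCylinder F i =
      {x | 1 ∈ yab {g : G | g • x ∈ A} {g : G | g • x ∈ B} ⁻¹' {i}} := fun _ => rfl
  have hone : itinerary ⁻¹' symbolCylinder F 1 = A := by
    simp [hfiber, yab_preimage_one]
  have htwo : itinerary ⁻¹' symbolCylinder F 2 = B := by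
    simp [hfiber, yab_preimage_two (hdisj _)]
  simpa only [hone, htwo] using hF.preimage (isClopen_symbolCylinder 1) hcont hequiv

lemma IsFolner.comparisonProperty_iff [Countable G] {Fs : ℕ → Finset G} (hFs : IsFolner Fs) :
    ComparisonProperty G ↔
      ∀ F : Finset G, Subequiv G (advantageShift F) (symbolCylinder F 1) (symbolCylinder F 2) := by
  constructor
  · intro hG F
    let : MeasurableSpace (advantageShift F) := borel _
    have : BorelSpace (advantageShift F) := ⟨rfl⟩
    exact hG.admitsComparison _ _ (isClopen_symbolCylinder 1) (isClopen_symbolCylinder 2)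
      fun μ _ _ => (isAdvantageWindow_symbolCylinder F).measure_lt_measure
        (isClopen_symbolCylinder 1).isOpen.measurableSet
        (isClopen_symbolCylinder 2).isOpen.measurableSet μ
  · intro hF X _ _ _ _ _ _ _ _ A B hA hB hAB
    obtain ⟨F, hwindow⟩ := hFs.exists_isAdvantageWindow (hA.diff hB) (hB.diff hA) fun μ hμ hinv =>
      measure_diff_lt_measure_diff hA.isOpen.measurableSet hB.isOpen.measurableSet (hAB μ hμ hinv)
    exact .of_diff hA hB (subequiv_of_isAdvantageWindow (hA.diff hB) (hB.diff hA)
      (disjoint_sdiff_sdiff) hwindow (hF F))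

end Comparison

section BlockCode

variable {ι Λ E : Type*}

/-- A map on `Λ^ι` reading only finitely many coordinates. This is the map `x ↦ Ξ (x|_F)` of a block
code `Ξ : Λ^F → E`. -/
def IsBlockCode (c : (ι → Λ) → E) : Prop :=
  ∃ F : Finset ι, DependsOn c (F : Set ι)

variable [TopologicalSpace Λ]

lemma exists_finset_forall_eqOn_mem {U : Set (ι → Λ)} (hU : IsOpen U) {y : ι → Λ} (hy : y ∈ U) :
    ∃ P : Finset ι, ∀ z, Set.EqOn z y P → z ∈ U := by
  obtain ⟨P, u, hu, hPU⟩ := isOpen_pi_iff.1 hU y hy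
  exact ⟨P, fun z hz => hPU fun i hi => hz hi ▸ (hu i hi).2⟩

variable [DiscreteTopology Λ]

lemma isOpen_setOf_eqOn (P : Finset ι) (y : ι → Λ) : IsOpen {z | Set.EqOn z y P} := by
  have hpi : {z | Set.EqOn z y P} = (P : Set ι).pi fun i => {y i} := by
    ext z
    simp [Set.EqOn]
  exact hpi ▸ isOpen_set_pi P.finite_toSet fun i _ => isOpen_discrete {y i}

lemma IsBlockCode.isLocallyConstant {c : (ι → Λ) → E} (hc : IsBlockCode c) :
    IsLocallyConstant c := by
  obtain ⟨F, hF⟩ := hc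
  exact (IsLocallyConstant.iff_exists_open c).2 fun y =>
    ⟨{z | Set.EqOn z y F}, isOpen_setOf_eqOn F y, Set.eqOn_refl y F, fun z hz => hF hz⟩

variable {S : Set (ι → Λ)} {ξ : S → E}

lemma exists_finset_forall_eqOn_imp_eq [CompactSpace S] (hξ : IsLocallyConstant ξ) :
    ∃ P : Finset ι, ∀ y z : S, Set.EqOn y.1 z.1 P → ξ y = ξ z := by
  have hlocal : ∀ y : S, ∃ P : Finset ι, ∀ z : S, Set.EqOn z.1 y.1 P → ξ z = ξ y := fun y => by
    obtain ⟨U, hU, hUξ⟩ := isOpen_induced_iff.1 (hξ.isOpen_fiber (ξ y))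
    obtain ⟨P, hP⟩ := exists_finset_forall_eqOn_mem hU (y := y.1) (hUξ.ge rfl)
    exact ⟨P, fun z hz => hUξ.le (hP z hz)⟩
  choose P hP using hlocal
  obtain ⟨T, hT⟩ := isCompact_univ.elim_finite_subcover
    (fun y : S => {z : S | Set.EqOn z.1 y.1 (P y)})
    (fun y => (isOpen_setOf_eqOn (P y) y.1).preimage continuous_subtype_val)
    fun y _ => Set.mem_iUnion.2 ⟨y, Set.eqOn_refl y.1 _⟩
  refine ⟨T.biUnion P, fun y z hyz => ?_⟩
  obtain ⟨x, hxT, hzx⟩ := Set.mem_iUnion₂.1 (hT (Set.mem_univ z))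
  have hyz' : Set.EqOn y.1 z.1 (P x) := hyz.mono (Finset.subset_biUnion_of_mem P hxT)
  rw [hP x z hzx, hP x y (hyz'.trans hzx)]

lemma exists_isBlockCode_forall_eq [CompactSpace S] [Nonempty E] (hξ : IsLocallyConstant ξ) :
    ∃ c : (ι → Λ) → E, IsBlockCode c ∧ ∀ y : S, c y = ξ y := by
  obtain ⟨P, hP⟩ := exists_finset_forall_eqOn_imp_eq hξ
  let pattern : S → P → Λ := fun y => P.restrict y.1
  have hfactors : Function.FactorsThrough ξ pattern := fun y z hyz =>
    hP y z fun i hi => congrFun hyz ⟨i, hi⟩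
  refine ⟨fun x => Function.extend pattern ξ (fun _ => Classical.arbitrary E) (P.restrict x),
    ⟨P, fun x x' hxx' => ?_⟩, fun y => hfactors.extend_apply _ y⟩
  have hrestrict : P.restrict x = P.restrict x' := funext fun i => hxx' i i.2
  simp only [hrestrict]

end BlockCode

section DeterminesInjection

variable {G : Type*} [Group G]

/-- The map `a ↦ c (a(y)) * a` is an injection from the positions of the symbol `1` in `y` to the
positions of the symbol `2`. For `y = y^{AB}` it is an injection `A → B`. -/
def DeterminesInjection (c : (G → Fin 3) → G) (y : G → Fin 3) : Prop :=
  IsTransport (fun g => c (shiftMap g y)) (y ⁻¹' {1}) (y ⁻¹' {2})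

lemma DeterminesInjection.shiftMap {c : (G → Fin 3) → G} {y : G → Fin 3}
    (h : DeterminesInjection c y) (t : G) : DeterminesInjection c (shiftMap t y) := by
  simpa only [DeterminesInjection, Function.comp_def, shiftMap_mul] using!
    h.preimage (φ := fun g => g * t) fun k g => smul_mul_assoc k g t

lemma isClosed_setOf_determinesInjection {c : (G → Fin 3) → G} (hc : IsBlockCode c) :
    IsClosed {y | DeterminesInjection c y} := by
  have hsymbol : ∀ (a : G) (i : Fin 3), IsClopen {y : G → Fin 3 | y a = i} := fun a i =>
    (isClopen_discrete {i}).preimage (continuous_apply a)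
  have hcode : ∀ a e : G, IsOpen {y | c (shiftMap a y) = e} := fun a e =>
    (hc.isLocallyConstant.isOpen_fiber e).preimage (continuous_shiftMap a)
  have hiff : ∀ y, DeterminesInjection c y ↔
      (∀ a e : G, y a = 1 → c (shiftMap a y) = e → y (e * a) = 2) ∧
      ∀ a b d e : G, y a = 1 → y b = 1 → c (shiftMap a y) = d → c (shiftMap b y) = e →
        d * a = e * b → a = b := fun y => by
    grind [DeterminesInjection, IsTransport, Set.MapsTo, Set.InjOn, smul_eq_mul]
  simp only [hiff, Set.ofPred_and, Set.ofPred_forall]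
  refine IsClosed.inter (isClosed_iInter fun a => isClosed_iInter fun e => ?_)
    (isClosed_iInter fun a => isClosed_iInter fun b => isClosed_iInter fun d =>
      isClosed_iInter fun e => ?_)
  · exact isClosed_imp (hsymbol a 1).isOpen (isClosed_imp (hcode a e) (hsymbol _ 2).isClosed)
  · exact isClosed_imp (hsymbol a 1).isOpen (isClosed_imp (hsymbol b 1).isOpen
      (isClosed_imp (hcode a d) (isClosed_imp (hcode b e) isClosed_const)))

end DeterminesInjection

section TransitivePoint

variable {G : Type*} [Group G]

lemma exists_disjoint_mul_singleton [Infinite G] (U K : Finset G) :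
    ∃ t : G, Disjoint U (K * {t}) := by
  obtain ⟨t, ht⟩ := Infinite.exists_notMem_finset (K⁻¹ * U)
  refine ⟨t, Finset.disjoint_left.2 fun u hu hut => ht ?_⟩
  obtain ⟨k, hk, rfl⟩ : ∃ k ∈ K, k * t = u := by simpa [Finset.mem_mul] using hut
  exact Finset.mem_mul.2 ⟨k⁻¹, Finset.inv_mem_inv hk, _, hu, inv_mul_cancel_left k t⟩

lemma exists_seq_pairwise_disjoint_mul_singleton [Infinite G] (K : ℕ → Finset G) :
    ∃ t : ℕ → G, Pairwise fun m n => Disjoint (K m * {t m}) (K n * {t n}) := by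
  choose τ hτ using fun (n : ℕ) (U : Finset G) => exists_disjoint_mul_singleton U (K n)
  let U : ℕ → Finset G := fun n => n.rec ∅ fun n V => V ∪ K n * {τ n V}
  have hU : Monotone U := monotone_nat_of_le_succ fun n => Finset.subset_union_left
  have hlt : ∀ m n, m < n → Disjoint (K m * {τ m (U m)}) (K n * {τ n (U n)}) := fun m n hmn =>
    (hτ n (U n)).mono_left
      (Finset.subset_union_right.trans (hU (Nat.succ_le_of_lt hmn) : U (m + 1) ≤ U n))
  exact ⟨fun n => τ n (U n), fun m n hmn =>
    hmn.lt_or_gt.elim (hlt m n) fun hnm => (hlt n m hnm).symm⟩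

lemma exists_pairwise_disjoint_mul_singleton [Infinite G] {ι : Type*} [Countable ι]
    (K : ι → Finset G) :
    ∃ t : ι → G, Pairwise fun i j => Disjoint (K i * {t i}) (K j * {t j}) := by
  obtain ⟨e, he⟩ := exists_injective_nat ι
  obtain ⟨t, ht⟩ := exists_seq_pairwise_disjoint_mul_singleton (Function.extend e K fun _ => ∅)
  exact ⟨fun i => t (e i), fun i j hij => by simpa only [he.extend_apply] using ht (he.ne hij)⟩

variable {F : Finset G}

lemma const_two_mem_advantageShift (hF : F.Nonempty) : (fun _ => 2) ∈ advantageShift F :=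
  fun g => by simpa using hF.card_pos

lemma mem_advantageShift_of_forall_exists {y : G → Fin 3}
    (h : ∀ g, ∃ x ∈ advantageShift F, ∀ f ∈ F, y (f * g) = x (f * g) ∨ y (f * g) = 2) :
    y ∈ advantageShift F := fun g => by
  obtain ⟨x, hx, hyx⟩ := h g
  calc {f ∈ F | f • g ∈ y ⁻¹' {1}}.card ≤ {f ∈ F | f • g ∈ x ⁻¹' {1}}.card :=
        Finset.card_le_card (by grind [smul_eq_mul])
    _ < {f ∈ F | f • g ∈ x ⁻¹' {2}}.card := hx g
    _ ≤ {f ∈ F | f • g ∈ y ⁻¹' {2}}.card :=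
        Finset.card_le_card (by grind [smul_eq_mul])

lemma exists_forall_eqOn_of_pairwise_disjoint {κ ι Λ : Type*} {D : κ → Set ι}
    (hD : Pairwise fun i j => Disjoint (D i) (D j)) (x : κ → ι → Λ) (z : Λ) :
    ∃ y : ι → Λ, (∀ i, Set.EqOn y (x i) (D i)) ∧ ∀ g, (∀ i, g ∉ D i) → y g = z := by
  refine ⟨fun g => if h : ∃ i, g ∈ D i then x h.choose g else z, fun i g hg => ?_,
    fun g hg => dif_neg (not_exists.2 hg)⟩
  have hex : ∃ i, g ∈ D i := ⟨i, hg⟩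
  have hi : hex.choose = i := hD.eq (Set.not_disjoint_iff.2 ⟨g, hex.choose_spec, hg⟩)
  simp only [dif_pos hex, hi]

-- Outside the regions `D i` we put the symbol `2`; a window meets at most one region.
lemma exists_mem_advantageShift_forall_eqOn (hF : F.Nonempty) {κ : Type*} {D : κ → Finset G}
    (hD : Pairwise fun i j => Disjoint (F⁻¹ * D i) (F⁻¹ * D j)) {x : κ → G → Fin 3}
    (hx : ∀ i, x i ∈ advantageShift F) :
    ∃ y ∈ advantageShift F, ∀ i, Set.EqOn y (x i) (D i) := by
  have hwindow : ∀ {i f g}, f ∈ F → f * g ∈ D i → g ∈ F⁻¹ * D i := fun {i f g} hf hfg =>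
    Finset.mem_mul.2 ⟨f⁻¹, Finset.inv_mem_inv hf, _, hfg, inv_mul_cancel_left f g⟩
  have hunique : ∀ {i j g}, g ∈ F⁻¹ * D i → g ∈ F⁻¹ * D j → i = j := fun hi hj =>
    hD.eq fun hdisj => Finset.disjoint_left.1 hdisj hi hj
  have hdisjoint : Pairwise fun i j => Disjoint (D i : Set G) (D j) := fun i j hij => by
    obtain ⟨f, hf⟩ := hF
    refine Set.disjoint_left.2 fun g hi hj => hij (hunique (g := f⁻¹ * g) ?_ ?_)
    · exact hwindow hf (by rwa [mul_inv_cancel_left])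
    · exact hwindow hf (by rwa [mul_inv_cancel_left])
  obtain ⟨y, hyD, hy2⟩ := exists_forall_eqOn_of_pairwise_disjoint hdisjoint x 2
  refine ⟨y, mem_advantageShift_of_forall_exists fun g => ?_, hyD⟩
  by_cases hg : ∃ i, g ∈ F⁻¹ * D i
  · obtain ⟨i, hi⟩ := hg
    refine ⟨x i, hx i, fun f hf => ?_⟩
    by_cases hfg : f * g ∈ D i
    · exact .inl (hyD i hfg)
    · exact .inr (hy2 _ fun j hj => hfg (hunique hi (hwindow hf hj) ▸ hj))
  · exact ⟨_, const_two_mem_advantageShift hF, fun f hf =>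
      .inr (hy2 _ fun i hi => hg ⟨i, hwindow hf hi⟩)⟩

lemma exists_mem_advantageShift_forall_exists_shiftMap_eqOn [Countable G] [Infinite G]
    (hF : F.Nonempty) :
    ∃ y ∈ advantageShift F, ∀ z ∈ advantageShift F, ∀ P : Finset G,
      ∃ t : G, Set.EqOn (shiftMap t y) z P := by
  let patterns (P : Finset G) : Set (P → Fin 3) := (fun z => P.restrict z) '' advantageShift F
  choose z hz hzP using fun i : Σ P, patterns P => i.2.2
  obtain ⟨t, ht⟩ := exists_pairwise_disjoint_mul_singleton fun i : Σ P, patterns P => F⁻¹ * i.1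
  obtain ⟨y, hy, hyz⟩ := exists_mem_advantageShift_forall_eqOn hF
    (D := fun i => i.1 * {t i}) (x := fun i => shiftMap (t i)⁻¹ (z i))
    (by simpa only [mul_assoc] using ht) fun i => shiftMap_mem_advantageShift (hz i) _
  refine ⟨y, hy, fun w hw P => ?_⟩
  let i : Σ P, patterns P := ⟨P, P.restrict w, Set.mem_image_of_mem _ hw⟩
  refine ⟨t i, fun p hp => ?_⟩
  have hyp : y (p * t i) = z i p := by
    simpa using hyz i (Finset.mul_mem_mul (show p ∈ i.1 from hp) (Finset.mem_singleton_self (t i)))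
  exact hyp.trans (congrFun (hzP i) ⟨p, hp⟩)

lemma exists_mem_advantageShift_subset_closure [Countable G] [Infinite G] (hF : F.Nonempty) :
    ∃ y ∈ advantageShift F, advantageShift F ⊆ closure (Set.range fun t => shiftMap t y) := by
  obtain ⟨y, hy, hyP⟩ := exists_mem_advantageShift_forall_exists_shiftMap_eqOn hF
  refine ⟨y, hy, fun z hz => mem_closure_iff.2 fun U hU hzU => ?_⟩
  obtain ⟨P, hP⟩ := exists_finset_forall_eqOn_mem hU hzU
  obtain ⟨t, ht⟩ := hyP z hz P
  exact ⟨_, hP _ ht, t, rfl⟩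

end TransitivePoint

section BanachDensityComparison

variable {G : Type*} [Group G] {F : Finset G}

lemma isTransport_symbolCylinder_iff {ξ : advantageShift F → G} :
    IsTransport ξ (symbolCylinder F 1) (symbolCylinder F 2) ↔
      ∀ y, IsTransport (fun g : G => ξ (g • y)) (y.1 ⁻¹' {1}) (y.1 ⁻¹' {2}) := by
  simp only [isTransport_iff_forall_orbit (A := symbolCylinder F 1), setOf_smul_mem_symbolCylinder]

lemma subequiv_symbolCylinder_of_forall_determinesInjection {c : (G → Fin 3) → G}
    (hc : IsBlockCode c) (h : ∀ y ∈ advantageShift F, DeterminesInjection c y) :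
    Subequiv G (advantageShift F) (symbolCylinder F 1) (symbolCylinder F 2) :=
  subequiv_of_isTransport (isClopen_symbolCylinder 1)
    (hc.isLocallyConstant.comp_continuous continuous_subtype_val)
    (isTransport_symbolCylinder_iff.2 fun y => h y y.2)

lemma Subequiv.exists_isBlockCode_forall_determinesInjection
    (h : Subequiv G (advantageShift F) (symbolCylinder F 1) (symbolCylinder F 2)) :
    ∃ c, IsBlockCode c ∧ ∀ y ∈ advantageShift F, DeterminesInjection c y := by
  obtain ⟨ξ, hξ, htransport⟩ := h.exists_isTransport
  obtain ⟨c, hc, hcξ⟩ := exists_isBlockCode_forall_eq hξ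
  refine ⟨c, hc, fun y hy => ?_⟩
  have hcode : ∀ g : G, c (shiftMap g y) = ξ (g • ⟨y, hy⟩) := fun g => hcξ (g • ⟨y, hy⟩)
  simpa only [DeterminesInjection, hcode] using isTransport_symbolCylinder_iff.1 htransport ⟨y, hy⟩

-- Every map on the finite space is locally constant, so each orbit can use a code of its own.
lemma subequiv_symbolCylinder_of_finite [Finite G]
    (h : ∀ y ∈ advantageShift F, ∃ c, DeterminesInjection c y) :
    Subequiv G (advantageShift F) (symbolCylinder F 1) (symbolCylinder F 2) := by
  choose c hc using fun y : advantageShift F => h y y.2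
  let rep : advantageShift F → advantageShift F := fun y =>
    (Quotient.mk'' y : MulAction.orbitRel.Quotient G (advantageShift F)).out
  have hrep_smul : ∀ (g : G) y, rep (g • y) = rep y := fun g y =>
    congrArg Quotient.out (MulAction.orbitRel.Quotient.quotient_smul_eq)
  have hrep : ∀ y, ∃ t : G, t • rep y = y := fun y =>
    MulAction.orbitRel_apply.1 (Quotient.exact (Quotient.out_eq _).symm)
  refine subequiv_of_isTransport (ξ := fun y => c (rep y) y) (isClopen_symbolCylinder 1)
    (IsLocallyConstant.of_discrete _) (isTransport_symbolCylinder_iff.2 fun y => ?_)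
  obtain ⟨t, ht⟩ := hrep y
  have hy : DeterminesInjection (c (rep y)) y.1 := by
    simpa only [← coe_smul_advantageShift, ht] using (hc (rep y)).shiftMap t
  simpa only [hrep_smul] using! hy

lemma exists_isBlockCode_forall_determinesInjection_of_infinite [Countable G] [Infinite G]
    (h : ∀ y ∈ advantageShift F, ∃ c, IsBlockCode c ∧ DeterminesInjection c y) :
    ∃ c, IsBlockCode c ∧ ∀ y ∈ advantageShift F, DeterminesInjection c y := by
  rcases (advantageShift F).eq_empty_or_nonempty with hempty | ⟨x, hx⟩
  · exact ⟨fun _ => 1, ⟨∅, fun _ _ _ => rfl⟩, by simp [hempty]⟩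
  have hF : F.Nonempty := IsAdvantageWindow.nonempty hx
  obtain ⟨y, hy, hdense⟩ := exists_mem_advantageShift_subset_closure hF
  obtain ⟨c, hc, hcy⟩ := h y hy
  have horbit : Set.range (fun t => shiftMap t y) ⊆ {z | DeterminesInjection c z} :=
    Set.range_subset_iff.2 hcy.shiftMap
  exact ⟨c, hc, fun z hz =>
    closure_minimal horbit (isClosed_setOf_determinesInjection hc) (hdense hz)⟩

lemma subequiv_symbolCylinder_iff [Countable G] (F : Finset G) :
    Subequiv G (advantageShift F) (symbolCylinder F 1) (symbolCylinder F 2) ↔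
      ∀ y ∈ advantageShift F, ∃ c, IsBlockCode c ∧ DeterminesInjection c y := by
  refine ⟨fun h y hy => ?_, fun h => ?_⟩
  · obtain ⟨c, hc, hinj⟩ := h.exists_isBlockCode_forall_determinesInjection
    exact ⟨c, hc, hinj y hy⟩
  cases finite_or_infinite G
  · exact subequiv_symbolCylinder_of_finite fun y hy => (h y hy).imp fun _ hc => hc.2
  · obtain ⟨c, hc, hinj⟩ := exists_isBlockCode_forall_determinesInjection_of_infinite h
    exact subequiv_symbolCylinder_of_forall_determinesInjection hc hinj

lemma exists_blockCode_injection_iff {A B : Set G} (hAB : Disjoint A B) :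
    (∃ φt : G → G,
      (∃ (F E : Finset G) (Ξ : (↥(F : Set G) → Fin 3) → G),
        (∀ b, Ξ b ∈ E) ∧ ∀ a : G, φt a = Ξ (fun f => shiftMap a (yab A B) f.1) * a) ∧
      Set.MapsTo φt A B ∧ Set.InjOn φt A) ↔
    ∃ c, IsBlockCode c ∧ DeterminesInjection c (yab A B) := by
  simp only [DeterminesInjection, yab_preimage_one, yab_preimage_two hAB]
  constructor
  · rintro ⟨φt, ⟨F, _, Ξ, -, hφt⟩, hmaps, hinj⟩
    obtain rfl : φt = fun a => Ξ (fun f => shiftMap a (yab A B) f.1) * a := funext hφt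
    exact ⟨fun x => Ξ fun f => x f.1,
      ⟨F, fun x x' hxx' => congrArg Ξ (funext fun f => hxx' f.1 f.2)⟩, hmaps, hinj⟩
  · rintro ⟨c, ⟨F, hF⟩, htransport⟩
    obtain ⟨Ξ, rfl⟩ := dependsOn_iff_exists_comp.1 hF
    exact ⟨_, ⟨F, (Set.finite_range Ξ).toFinset, Ξ, by simp, fun a => rfl⟩, htransport⟩

lemma IsFolner.bdComparisonProperty_iff {Fs : ℕ → Finset G} (hFs : IsFolner Fs) :
    BDComparisonProperty G ↔
      ∀ F : Finset G, ∀ y ∈ advantageShift F, ∃ c, IsBlockCode c ∧ DeterminesInjection c y := by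
  constructor
  · intro hG F y hy
    have hdisj : Disjoint (y ⁻¹' {1}) (y ⁻¹' {2}) := Disjoint.preimage y (by simp)
    have hcode := (exists_blockCode_injection_iff hdisj).1
      (hG _ _ hdisj ⟨Fs, hFs, hFs.limsup_advD_pos_iff.2 ⟨F, hy⟩⟩)
    rwa [yab_preimage_preimage] at hcode
  · rintro hF A B hAB ⟨Es, hEs, hpos⟩
    obtain ⟨F, hwindow⟩ := hEs.limsup_advD_pos_iff.1 hpos
    exact (exists_blockCode_injection_iff hAB).2
      (hF F _ ((yab_mem_advantageShift_iff hAB).2 hwindow))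

end BanachDensityComparison

theorem stmt11 (G : Type*) [Group G] [Countable G]
    (hAmen : ∃ Fs : ℕ → Finset G, IsFolner Fs) :
    ComparisonProperty G ↔ BDComparisonProperty G := by
  obtain ⟨Fs, hFs⟩ := hAmen
  rw [hFs.comparisonProperty_iff, hFs.bdComparisonProperty_iff]
  exact forall_congr' subequiv_symbolCylinder_iff
end

section
/- Let G be a countable amenable group. If every finitely generated subgroup H of G has the comparison property, then G has the comparison property. -/
/-!
STATEMENT 13 (Proposition 44 of the paper):
If every finitely generated subgroup of a countable amenable group `G` has the
comparison property, then `G` has the comparison property.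
-/

open Filter Topology Pointwise MeasureTheory

/-!
Suppose `A` is not subequivalent to `B` under `G`, hence under no finitely generated subgroup `H`.
By comparison for `H`, some `H`-invariant probability measure `μ` has `μ B ≤ μ A`. Since `A` and `B`
are clopen, these measures form a weak-* closed set, nonempty for every `H` and decreasing in `H`.
By compactness all these sets share a measure, which is then `G`-invariant and contradicts
`μ A < μ B`.
-/

section ProbabilityMeasures

variable {X : Type*} [TopologicalSpace X] [HasOuterApproxClosed X] [MeasurableSpace X]

theorem continuous_measure_of_isClopen [OpensMeasurableSpace X] {E : Set X} (hE : IsClopen E) :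
    Continuous fun μ : ProbabilityMeasure X => (μ : Measure X) E := by
  simp_rw [← ProbabilityMeasure.ennreal_coeFn_eq_coeFn_toMeasure]
  exact ENNReal.continuous_coe.comp <| continuous_iff_continuousAt.2 fun μ =>
    ProbabilityMeasure.tendsto_measure_of_isClopen_of_tendsto tendsto_id hE

variable (G : Type*) [Group G] [MulAction G X] [ContinuousConstSMul G X] [BorelSpace X]

theorem isClosed_setOfPred_smulInvariantMeasure :
    IsClosed {μ : ProbabilityMeasure X | SMulInvariantMeasure G X (μ : Measure X)} := by
  have invariant_iff (μ : ProbabilityMeasure X) : SMulInvariantMeasure G X (μ : Measure X) ↔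
      ∀ g : G, μ.map (continuous_const_smul g).measurable.aemeasurable = μ := by
    simp_rw [← ProbabilityMeasure.toMeasure_injective.eq_iff, ProbabilityMeasure.toMeasure_map]
    exact (smulInvariantMeasure_tfae G (μ : Measure X)).out 0 5
  simp_rw [invariant_iff, Set.ofPred_forall]
  exact isClosed_iInter fun g =>
    isClosed_eq (ProbabilityMeasure.continuous_map (continuous_const_smul g)) continuous_id

end ProbabilityMeasures

section Subgroups

variable {G : Type*} [Group G] {X : Type*} [MulAction G X]

instance continuousConstSMul_subgroup [TopologicalSpace X] [ContinuousConstSMul G X]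
    (H : Subgroup G) : ContinuousConstSMul H X :=
  ⟨fun g => continuous_const_smul (g : G)⟩

theorem Subequiv.of_subgroup [TopologicalSpace X] {H : Subgroup G} {A B : Set X}
    (h : Subequiv H X A B) : Subequiv G X A B := by
  obtain ⟨k, pieces, g, hclopen, hunion, hdisj, hsub, himage⟩ := h
  exact ⟨k, pieces, fun i => g i, hclopen, hunion, hdisj, hsub, himage⟩

theorem smulInvariantMeasure_subgroup_mono [MeasurableSpace X] {μ : Measure X} {H K : Subgroup G}
    (hHK : H ≤ K) (hμ : SMulInvariantMeasure K X μ) : SMulInvariantMeasure H X μ :=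
  ⟨fun g _ hs => hμ.measure_preimage_smul ⟨g, hHK g.2⟩ hs⟩

theorem smulInvariantMeasure_of_forall_subgroup [MeasurableSpace X] {μ : Measure X} {ι : Sort*}
    {H : ι → Subgroup G} (hcover : ∀ g, ∃ i, g ∈ H i)
    (hμ : ∀ i, SMulInvariantMeasure (H i) X μ) : SMulInvariantMeasure G X μ := by
  refine ⟨fun g s hs => ?_⟩
  obtain ⟨i, hg⟩ := hcover g
  exact (hμ i).measure_preimage_smul ⟨g, hg⟩ hs

end Subgroups

section Obstructions

variable (G : Type*) [Group G] {X : Type*} [MeasurableSpace X] [MulAction G X]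

/-- The invariant probability measures `μ` that violate the hypothesis `μ A < μ B` of comparison.
They are bundled as `ProbabilityMeasure X` for the sake of its compact weak topology. -/
def comparisonObstructions (A B : Set X) : Set (ProbabilityMeasure X) :=
  {μ | SMulInvariantMeasure G X (μ : Measure X) ∧ (μ : Measure X) B ≤ (μ : Measure X) A}

theorem admitsComparison_iff_nonempty_comparisonObstructions [TopologicalSpace X] :
    AdmitsComparison G X ↔ ∀ A B : Set X, IsClopen A → IsClopen B → ¬ Subequiv G X A B →
      (comparisonObstructions G A B).Nonempty := by
  refine forall₄_congr fun A B _ _ => ?_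
  rw [← not_imp_comm, Set.not_nonempty_iff_eq_empty, Set.eq_empty_iff_forall_notMem]
  simp only [comparisonObstructions, Set.mem_ofPred_eq, not_and, not_le]
  exact imp_congr_left ⟨fun h μ => h μ μ.2, fun h μ hμ => h ⟨μ, hμ⟩⟩

theorem isClosed_comparisonObstructions [TopologicalSpace X] [HasOuterApproxClosed X]
    [BorelSpace X] [ContinuousConstSMul G X] {A B : Set X} (hA : IsClopen A) (hB : IsClopen B) :
    IsClosed (comparisonObstructions G A B) :=
  (isClosed_setOfPred_smulInvariantMeasure G).inter <|
    isClosed_le (continuous_measure_of_isClopen hB) (continuous_measure_of_isClopen hA)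

variable {G}

theorem antitone_comparisonObstructions (A B : Set X) :
    Antitone fun H : Subgroup G => comparisonObstructions H A B :=
  fun _ _ hHK _ hμ => ⟨smulInvariantMeasure_subgroup_mono hHK hμ.1, hμ.2⟩

theorem iInter_comparisonObstructions_subset {ι : Sort*} {H : ι → Subgroup G}
    (hcover : ∀ g, ∃ i, g ∈ H i) (A B : Set X) :
    ⋂ i, comparisonObstructions (H i) A B ⊆ comparisonObstructions G A B := by
  intro μ hμ
  rw [Set.mem_iInter] at hμ
  obtain ⟨i₀, -⟩ := hcover 1
  exact ⟨smulInvariantMeasure_of_forall_subgroup hcover fun i => (hμ i).1, (hμ i₀).2⟩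

theorem AdmitsComparison.of_directed_subgroups [TopologicalSpace X] [CompactSpace X]
    [T2Space X] [HasOuterApproxClosed X] [BorelSpace X] [ContinuousConstSMul G X] {ι : Type*}
    {H : ι → Subgroup G} (hdir : Directed (· ≤ ·) H) (hcover : ∀ g, ∃ i, g ∈ H i)
    (h : ∀ i, AdmitsComparison (H i) X) : AdmitsComparison G X := by
  rw [admitsComparison_iff_nonempty_comparisonObstructions]
  intro A B hA hB hAB
  have : Nonempty ι := (hcover 1).nonempty
  have hclosed (i : ι) : IsClosed (comparisonObstructions (H i) A B) :=
    isClosed_comparisonObstructions (H i) hA hB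
  have hnonempty (i : ι) : (comparisonObstructions (H i) A B).Nonempty :=
    (admitsComparison_iff_nonempty_comparisonObstructions (H i)).1 (h i) A B hA hB
      fun hsub => hAB hsub.of_subgroup
  have hdirected : Directed (· ⊇ ·) fun i => comparisonObstructions (H i) A B :=
    hdir.mono_comp (· ≤ ·) (g := fun K : Subgroup G => comparisonObstructions K A B)
      (antitone_comparisonObstructions A B)
  exact (IsCompact.nonempty_iInter_of_directed_nonempty_isCompact_isClosed _ hdirected hnonempty
    (fun i => (hclosed i).isCompact) hclosed).mono (iInter_comparisonObstructions_subset hcover A B)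

end Obstructions

theorem stmt13_general (G : Type*) [Group G]
    (h : ∀ H : Subgroup G, H.FG → ComparisonProperty H) : ComparisonProperty G := by
  intro X _ _ _ _ _ _ _ _
  let H (S : Finset G) : Subgroup G := Subgroup.closure S
  have hmono : Monotone H := fun _ _ hST => Subgroup.closure_mono (Finset.coe_subset.2 hST)
  have hcover (g : G) : ∃ S, g ∈ H S := ⟨{g}, Subgroup.subset_closure (by simp)⟩
  exact AdmitsComparison.of_directed_subgroups hmono.directed_le hcover fun S => h (H S) ⟨S, rfl⟩ X

theorem stmt13 (G : Type*) [Group G] [Countable G]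
    (hAmen : ∃ Fs : ℕ → Finset G, IsFolner Fs)
    (h : ∀ H : Subgroup G, H.FG → ComparisonProperty H) :
    ComparisonProperty G :=
  stmt13_general G h
end
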